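/- arXiv:2506.17992 — 2 statements merged into one kernel-verified Lean document; each statement's English description precedes it below -/
import Mathlib

section
/- Let r be a positive integer, let p' be a positive real number, let k₀ be an even integer with |k₀|·|π/2 − p'| < 1/10^{r+1}, and let n be a natural number with (0.8)^{n+1}/(n+1)! < 1/10^{r+1}. Then for every real number x with |x − k₀·p'| ≤ 0.8, one has |sin x − (−1)^{k₀/2}·P_n(x − k₀·p')| < 1/10^r. -/
/-!
Write `k₀ = 2j`. The `π`-antiperiodicity of sine gives `sin x = (-1)^j sin (x - jπ)`. Sine is
`1`-Lipschitz, so moving the centre from `jπ = k₀ π/2` to `k₀ p'` costs at most `|k₀| |π/2 - p'|`.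
All derivatives of sine are bounded by `1`, so the Lagrange form of the remainder bounds the
truncation error at `y` by `|y|^(n+1) / (n+1)!`. Each of the two errors is below `1 / 10^(r+1)`.
-/

open Real

/-- Taylor polynomial of sine: `P n y = ∑_{m=0}^{⌊(n-1)/2⌋} (-1)^m y^(2m+1)/(2m+1)!`
(empty sum when `n = 0`). -/
noncomputable def sinTaylor (n : ℕ) (y : ℝ) : ℝ :=
  ∑ m ∈ Finset.range ((n + 1) / 2),
    (-1 : ℝ) ^ m * y ^ (2 * m + 1) / (Nat.factorial (2 * m + 1))

open scoped Nat

lemma abs_sub_sum_iteratedDeriv_le {f : ℝ → ℝ} {n : ℕ} {C : ℝ} (hf : ContDiff ℝ (n + 1) f)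
    (hC : ∀ t, |iteratedDeriv (n + 1) f t| ≤ C) (x₀ x : ℝ) :
    |f x - ∑ k ∈ Finset.range (n + 1), iteratedDeriv k f x₀ * (x - x₀) ^ k / k !| ≤
      C * |x - x₀| ^ (n + 1) / (n + 1)! := by
  rcases eq_or_ne x₀ x with rfl | hx
  · simp [Finset.sum_range_succ']
  obtain ⟨t, -, ht⟩ := taylor_mean_remainder_lagrange_iteratedDeriv hx hf.contDiffOn
  have hpoly : taylorWithinEval f n (Set.uIcc x₀ x) x₀ x =
      ∑ k ∈ Finset.range (n + 1), iteratedDeriv k f x₀ * (x - x₀) ^ k / k ! := by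
    rw [taylor_within_apply]
    refine Finset.sum_congr rfl fun k hk ↦ ?_
    have hkn : (k : WithTop ℕ∞) ≤ n + 1 := by exact_mod_cast (Finset.mem_range.1 hk).le
    rw [iteratedDerivWithin_eq_iteratedDeriv (uniqueDiffOn_uIcc hx) (hf.of_le hkn).contDiffAt
      Set.left_mem_uIcc, smul_eq_mul]
    ring
  rw [← hpoly, ht, abs_div, abs_mul, abs_pow, Nat.abs_cast]
  gcongr
  exact hC t

lemma sinTaylor_two_mul_add_one (m : ℕ) (y : ℝ) :
    sinTaylor (2 * m + 1) y =
      sinTaylor (2 * m) y + (-1) ^ m * y ^ (2 * m + 1) / (2 * m + 1)! := by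
  have hodd : (2 * m + 1 + 1) / 2 = m + 1 := by lia
  have heven : (2 * m + 1) / 2 = m := by lia
  rw [sinTaylor, sinTaylor, hodd, heven, Finset.sum_range_succ]

lemma sinTaylor_two_mul_add_two (m : ℕ) (y : ℝ) :
    sinTaylor (2 * m + 2) y = sinTaylor (2 * m + 1) y := by
  have h : (2 * m + 2 + 1) / 2 = (2 * m + 1 + 1) / 2 := by lia
  rw [sinTaylor, sinTaylor, h]

lemma sum_iteratedDeriv_sin_zero (n : ℕ) (y : ℝ) :
    ∑ k ∈ Finset.range (n + 1), iteratedDeriv k sin 0 * y ^ k / k ! = sinTaylor n y := by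
  induction n with
  | zero => simp [sinTaylor]
  | succ n ih =>
    rw [Finset.sum_range_succ, ih]
    rcases Nat.even_or_odd' n with ⟨m, rfl | rfl⟩
    · rw [sinTaylor_two_mul_add_one, iteratedDeriv_odd_sin]
      simp
    · rw [sinTaylor_two_mul_add_two, show 2 * m + 1 + 1 = 2 * (m + 1) by ring,
        iteratedDeriv_even_sin]
      simp

lemma abs_sin_sub_sinTaylor_le (n : ℕ) (y : ℝ) :
    |sin y - sinTaylor n y| ≤ |y| ^ (n + 1) / (n + 1)! := by
  simpa [sum_iteratedDeriv_sin_zero] using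
    abs_sub_sum_iteratedDeriv_le (n := n) contDiff_sin (abs_iteratedDeriv_sin_le_one (n + 1)) 0 y

lemma abs_sin_sub_neg_one_zpow_mul_sinTaylor_le (j : ℤ) (c x : ℝ) (n : ℕ) :
    |sin x - (-1) ^ j * sinTaylor n (x - c)| ≤
      |j * π - c| + |x - c| ^ (n + 1) / (n + 1)! := by
  have hsin : sin x = (-1) ^ j * sin (x - j * π) := by
    rw [← sin_add_int_mul_pi, sub_add_cancel]
  have hshift : |sin (x - j * π) - sin (x - c)| ≤ |j * π - c| := by
    simpa [abs_sub_comm] using abs_sin_sub_sin_le (x - j * π) (x - c)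
  calc |sin x - (-1) ^ j * sinTaylor n (x - c)|
      = |sin (x - j * π) - sinTaylor n (x - c)| := by
        rw [hsin, ← mul_sub, abs_mul, abs_neg_one_zpow, one_mul]
    _ ≤ |sin (x - j * π) - sin (x - c)| + |sin (x - c) - sinTaylor n (x - c)| :=
        abs_sub_le _ _ _
    _ ≤ |j * π - c| + |x - c| ^ (n + 1) / (n + 1)! :=
        add_le_add hshift (abs_sin_sub_sinTaylor_le n (x - c))

theorem sin_uniform_accuracy_even_general {k : ℤ} (hk : Even k) {p ε δ ρ : ℝ}
    (hp : |(k : ℝ)| * |π / 2 - p| < ε) {n : ℕ} (hn : ρ ^ (n + 1) / (n + 1)! < δ)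
    (x : ℝ) (hx : |x - k * p| ≤ ρ) :
    |sin x - (-1) ^ (k / 2) * sinTaylor n (x - k * p)| < ε + δ := by
  have hhalf : ((k / 2 : ℤ) : ℝ) = k / 2 := Int.cast_div hk.two_dvd two_ne_zero
  have hcentre : |((k / 2 : ℤ) : ℝ) * π - k * p| = |(k : ℝ)| * |π / 2 - p| := by
    rw [hhalf, ← abs_mul]
    ring_nf
  calc |sin x - (-1) ^ (k / 2) * sinTaylor n (x - k * p)|
      ≤ |(k : ℝ)| * |π / 2 - p| + |x - k * p| ^ (n + 1) / (n + 1)! :=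
        hcentre ▸ abs_sin_sub_neg_one_zpow_mul_sinTaylor_le (k / 2) (k * p) x n
    _ ≤ |(k : ℝ)| * |π / 2 - p| + ρ ^ (n + 1) / (n + 1)! := by gcongr
    _ < ε + δ := add_lt_add hp hn

theorem sin_uniform_accuracy_even (r : ℕ) (hr : 1 ≤ r)
    (p' : ℝ) (hp' : 0 < p')
    (k₀ : ℤ) (hk₀even : Even k₀)
    (hk₀ : |(k₀ : ℝ)| * |Real.pi / 2 - p'| < 1 / 10 ^ (r + 1))
    (n : ℕ) (hn : (0.8 : ℝ) ^ (n + 1) / (Nat.factorial (n + 1)) < 1 / 10 ^ (r + 1)) :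
    ∀ x : ℝ, |x - k₀ * p'| ≤ 0.8 →
      |Real.sin x - (-1 : ℝ) ^ (k₀ / 2) * sinTaylor n (x - k₀ * p')| < 1 / 10 ^ r := by
  have htwo : (1 : ℝ) / 10 ^ (r + 1) + 1 / 10 ^ (r + 1) ≤ 1 / 10 ^ r := by
    have hpos : (0 : ℝ) < 1 / 10 ^ r := by positivity
    rw [pow_succ, ← div_div]
    linarith
  exact fun x hx ↦ (sin_uniform_accuracy_even_general hk₀even hk₀ hn x hx).trans_le htwo
end

section
/- For every real number y and every natural number n, |cos y − (4·Q_n(y/3)³ − 3·Q_n(y/3))| ≤ 4·( |y|^{3n+3}/[3^{n+1}(n+1)!]³ + 3·|y|^{2n+2}/[3^{n+1}(n+1)!]² ) + 5·|y|^{n+1}/(3^n·(n+1)!). -/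
/-!
Put `θ = y / 3`. The identity `cos (3 θ) = T₃ (cos θ)` turns the problem into one about the
sensitivity of the Chebyshev polynomial `T₃ = 4 X ^ 3 - 3 X` to an error in its argument, and Taylor
bounds that error by `E = |θ| ^ (n + 1) / (n + 1)!`. On `[-1, 1]` every derivative of `T_m` is
bounded in absolute value by its value at `1`, so expanding at `cos θ` and comparing with the
expansion at `1` gives `|T_m (cos θ) - T_m q| ≤ T_m (1 + E) - 1` whenever `|cos θ - q| ≤ E`.
For `m = 3` the right-hand side is `4 (E ^ 3 + 3 E ^ 2) + 9 E`.
-/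

open Real

/-- Taylor polynomial of cosine: `Q n y = ∑_{m=0}^{⌊n/2⌋} (-1)^m y^(2m)/(2m)!`. -/
noncomputable def cosTaylor (n : ℕ) (y : ℝ) : ℝ :=
  ∑ m ∈ Finset.range (n / 2 + 1),
    (-1 : ℝ) ^ m * y ^ (2 * m) / (Nat.factorial (2 * m))

section Taylor

open scoped Nat

lemma abs_sub_taylorWithinEval_uIcc_le {f : ℝ → ℝ} {x₀ x C : ℝ} {n : ℕ}
    (hf : ContDiffOn ℝ (n + 1) f (Set.uIcc x₀ x))
    (hC : ∀ t ∈ Set.uIoo x₀ x, |iteratedDeriv (n + 1) f t| ≤ C) :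
    |f x - taylorWithinEval f n (Set.uIcc x₀ x) x₀ x| ≤ C * |x - x₀| ^ (n + 1) / (n + 1)! := by
  rcases eq_or_ne x₀ x with rfl | hx
  · simp
  · obtain ⟨t, ht, hremainder⟩ := taylor_mean_remainder_lagrange_iteratedDeriv hx hf
    rw [hremainder, abs_div, abs_mul, abs_pow, Nat.abs_cast]
    gcongr
    exact hC t ht

@[simp]
lemma cosTaylor_zero (x : ℝ) : cosTaylor 0 x = 1 := by
  simp [cosTaylor]

lemma cosTaylor_two_mul_add_one (k : ℕ) (x : ℝ) :
    cosTaylor (2 * k + 1) x = cosTaylor (2 * k) x := by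
  rw [cosTaylor, cosTaylor, show (2 * k + 1) / 2 = 2 * k / 2 by lia]

lemma cosTaylor_two_mul_add_two (k : ℕ) (x : ℝ) :
    cosTaylor (2 * k + 2) x =
      cosTaylor (2 * k + 1) x + (-1) ^ (k + 1) * x ^ (2 * k + 2) / (2 * k + 2)! := by
  rw [cosTaylor, cosTaylor, show (2 * k + 2) / 2 = (2 * k + 1) / 2 + 1 by lia,
    Finset.sum_range_succ, show (2 * k + 1) / 2 + 1 = k + 1 by lia, mul_add_one]

lemma taylorWithinEval_cos_eq_cosTaylor {s : Set ℝ} (hs : UniqueDiffOn ℝ s) (h0 : 0 ∈ s)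
    (n : ℕ) (x : ℝ) :
    taylorWithinEval cos n s 0 x = cosTaylor n x := by
  induction n with
  | zero => simp
  | succ n ih =>
    rw [taylorWithinEval_succ, ih,
      iteratedDerivWithin_eq_iteratedDeriv hs contDiff_cos.contDiffAt h0]
    obtain ⟨k, rfl | rfl⟩ := n.even_or_odd'
    · simp [cosTaylor_two_mul_add_one]
    · rw [cosTaylor_two_mul_add_two, show 2 * k + 1 + 1 = 2 * (k + 1) by ring,
        iteratedDeriv_even_cos, mul_add_one, Nat.factorial_succ (2 * k + 1)]
      simp only [Nat.cast_add, Nat.cast_mul, Nat.cast_ofNat, Nat.cast_one, mul_inv_rev, sub_zero,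
        Pi.mul_apply, Pi.pow_apply, Pi.neg_apply, Pi.one_apply, cos_zero, mul_one, smul_eq_mul,
        add_right_inj]
      field_simp

lemma abs_cos_sub_cosTaylor_le (n : ℕ) (x : ℝ) :
    |cos x - cosTaylor n x| ≤ |x| ^ (n + 1) / (n + 1)! := by
  rcases eq_or_ne 0 x with rfl | hx
  · simp [← taylorWithinEval_cos_eq_cosTaylor uniqueDiffOn_univ (Set.mem_univ 0)]
  · have h := abs_sub_taylorWithinEval_uIcc_le (f := cos) (n := n) (x₀ := 0) (x := x)
      contDiff_cos.contDiffOn fun t _ ↦ abs_iteratedDeriv_cos_le_one (n + 1) t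
    rwa [taylorWithinEval_cos_eq_cosTaylor (uniqueDiffOn_uIcc hx) Set.left_mem_uIcc, sub_zero,
      one_mul] at h

end Taylor

section Chebyshev

open Polynomial Polynomial.Chebyshev
open scoped Nat

lemma eval_sub_coeff_zero_eq_sum_range {A : Type*} [Ring A] {P : A[X]} {N : ℕ}
    (hN : P.natDegree ≤ N) (x : A) :
    P.eval x - P.coeff 0 = ∑ k ∈ Finset.range N, P.coeff (k + 1) * x ^ (k + 1) := by
  rw [eval_eq_sum_range' (Nat.lt_succ_of_le hN), Finset.sum_range_succ', pow_zero, mul_one,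
    add_sub_cancel_right]

lemma norm_eval_sub_coeff_zero_le_of_coeff_le {A : Type*} [SeminormedRing A] {P : A[X]} {R : ℝ[X]}
    (h : ∀ k, ‖P.coeff (k + 1)‖ ≤ R.coeff (k + 1)) {x : A} {r : ℝ} (hx : ‖x‖ ≤ r) :
    ‖P.eval x - P.coeff 0‖ ≤ R.eval r - R.coeff 0 := by
  rw [eval_sub_coeff_zero_eq_sum_range (le_max_left P.natDegree R.natDegree),
    eval_sub_coeff_zero_eq_sum_range (le_max_right P.natDegree R.natDegree)]
  refine norm_sum_le_of_le _ fun k _ ↦ (norm_mul_le _ _).trans ?_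
  have hpow : ‖x ^ (k + 1)‖ ≤ r ^ (k + 1) :=
    (norm_pow_le' x k.succ_pos).trans (pow_le_pow_left₀ (norm_nonneg x) hx _)
  exact mul_le_mul (h k) hpow (norm_nonneg _) ((norm_nonneg _).trans (h k))

lemma norm_eval_sub_eval_le_of_taylor_coeff_le {A : Type*} [SeminormedCommRing A] {P : A[X]}
    {R : ℝ[X]} {a : A} {b : ℝ}
    (h : ∀ k, ‖(taylor a P).coeff (k + 1)‖ ≤ (taylor b R).coeff (k + 1)) {x : A} {r : ℝ}
    (hx : ‖x - a‖ ≤ r) :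
    ‖P.eval x - P.eval a‖ ≤ R.eval (b + r) - R.eval b := by
  simpa [taylor_eval_sub, taylor_eval, add_comm r] using
    norm_eval_sub_coeff_zero_le_of_coeff_le h hx

lemma abs_taylor_T_coeff_le (m : ℤ) (k : ℕ) {x : ℝ} (hx : |x| ≤ 1) :
    |(taylor x (T ℝ m)).coeff k| ≤ (taylor 1 (T ℝ m)).coeff k := by
  have hderiv (t : ℝ) :
      (derivative^[k] (T ℝ m)).eval t = k ! * (taylor t (T ℝ m)).coeff k := by
    rw [taylor_coeff, ← factorial_smul_hasseDeriv]
    simp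
  have h := abs_iterate_derivative_T_real_le m k hx
  rw [hderiv, hderiv, abs_mul, Nat.abs_cast] at h
  exact le_of_mul_le_mul_left h (by positivity)

lemma abs_eval_T_sub_eval_T_le (m : ℤ) {x c r : ℝ} (hc : |c| ≤ 1) (hx : |x - c| ≤ r) :
    |(T ℝ m).eval x - (T ℝ m).eval c| ≤ (T ℝ m).eval (1 + r) - 1 := by
  simpa using norm_eval_sub_eval_le_of_taylor_coeff_le (A := ℝ)
    (fun k ↦ abs_taylor_T_coeff_le m (k + 1) hc) hx

lemma abs_cos_mul_sub_eval_T_cosTaylor_le (m : ℤ) (n : ℕ) (θ : ℝ) :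
    |cos (m * θ) - (T ℝ m).eval (cosTaylor n θ)| ≤
      (T ℝ m).eval (1 + |θ| ^ (n + 1) / (n + 1)!) - 1 := by
  rw [← T_real_cos, abs_sub_comm]
  refine abs_eval_T_sub_eval_T_le m (abs_cos_le_one θ) ?_
  rw [abs_sub_comm]
  exact abs_cos_sub_cosTaylor_le n θ

lemma eval_T_three {A : Type*} [CommRing A] (x : A) : (T A 3).eval x = 4 * x ^ 3 - 3 * x := by
  rw [show (3 : ℤ) = 1 + 2 by rfl, T_add_two]
  simp only [Int.reduceAdd, T_two, T_one, eval_sub, eval_mul, eval_ofNat, eval_X, eval_pow,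
    eval_one]
  ring

end Chebyshev

theorem cos_triple_angle_approx_error (y : ℝ) (n : ℕ) :
    |Real.cos y - (4 * (cosTaylor n (y / 3)) ^ 3 - 3 * cosTaylor n (y / 3))| ≤
      4 * (|y| ^ (3 * n + 3) / ((3 : ℝ) ^ (n + 1) * (Nat.factorial (n + 1))) ^ 3 +
           3 * |y| ^ (2 * n + 2) / ((3 : ℝ) ^ (n + 1) * (Nat.factorial (n + 1))) ^ 2) +
      5 * |y| ^ (n + 1) / ((3 : ℝ) ^ n * (Nat.factorial (n + 1))) := by
  set E : ℝ := |y| ^ (n + 1) / (3 ^ (n + 1) * Nat.factorial (n + 1)) with hE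
  have hE0 : 0 ≤ E := by positivity
  have herror : |cos y - (4 * cosTaylor n (y / 3) ^ 3 - 3 * cosTaylor n (y / 3))| ≤
      4 * (1 + E) ^ 3 - 3 * (1 + E) - 1 := by
    simpa [eval_T_three, mul_div_cancel₀, abs_div, div_pow, div_div] using
      abs_cos_mul_sub_eval_T_cosTaylor_le 3 n (y / 3)
  calc
    _ ≤ 4 * (1 + E) ^ 3 - 3 * (1 + E) - 1 := herror
    _ = 4 * (E ^ 3 + 3 * E ^ 2) + 9 * E := by ring
    _ ≤ 4 * (E ^ 3 + 3 * E ^ 2) + 15 * E := by linarith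
    _ = _ := by
      rw [hE]
      field_simp
      ring
end
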